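/- arXiv:1810.03267 — 2 statements merged into one kernel-verified Lean document; each statement's English description precedes it below -/
import Mathlib

section
/- Fix e_x, e_y, e_z ∈ [0,1] and set p₀ = (2−e_x−e_y−e_z)/2, p₁ = (e_x+e_y−e_z)/2, p₂ = (e_y+e_z−e_x)/2, p₃ = (e_z+e_x−e_y)/2, and assume all pᵢ ≥ 0. Let S be the set of two-qubit density matrices ρ with Tr(Π_x⁻ρ) = e_x, Tr(Π_y⁻ρ) = e_y and Tr(Π⁻ρ) = e_z. Then (i) every ρ ∈ S satisfies C(Φ(ρ)) − H(e_z) ≥ 1 − H({pᵢ}), where H({pᵢ}) = −∑_{i=0}^{3} pᵢ log₂ pᵢ, and (ii) the Bell-diagonal state with weights p₀, p₁, p₂, p₃ on |Φ⁺⟩, |Φ⁻⟩, |Ψ⁺⟩, |Ψ⁻⟩ respectively belongs to S and attains equality. Hence the minimum of C(Φ(ρ)) − H(e_z) over S equals 1 − H({pᵢ}) (the six-state key rate). -/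
/-!
The dephased state is a direct sum of two Hermitian 2×2 blocks, one for each parity. A block with
diagonal entries `m ± u` and off-diagonal entry `c` has eigenvalues `m ± v` with
`v² = u² + |c|²`. The constraints fix the weights `2m` of the two blocks (`1 - ez` and `ez`) and the
real parts `r` of their off-diagonal entries, in such a way that `m ± r` are `p0, p1` for the even
block and `p2, p3` for the odd one.

With `f x = x log₂ x` the coherence of a block is
`f (m + v) + f (m - v) - f (m + u) - f (m - u)`, and the claim is that it is minimal for `u = 0`,
`c = r`, the Bell-diagonal state. After dividing by `m` this is the inequality
`deficit u + deficit r ≤ deficit v` for `u² + r² ≤ v² ≤ 1` (`deficit_add_le`), where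
`deficit x = (1 + x) log (1 + x) + (1 - x) log (1 - x)`. It holds because
`deficit x = ∑ x ^ (2k + 2) / ((2k + 1) (k + 1))` is a power series in `x²` with nonnegative
coefficients and no constant term, and every power `y ↦ y ^ (k + 1)` is superadditive and monotone
on the nonnegative reals.

Entropies are read off from the roots of characteristic polynomials (`relEntCoh_dephase`).
-/

open Matrix Complex Kronecker
open scoped ComplexOrder

noncomputable section

/-- von Neumann entropy (base 2), via eigenvalues; junk value 0 if not Hermitian. -/
noncomputable def vnEntropy {n : Type*} [Fintype n] [DecidableEq n] (ρ : Matrix n n ℂ) : ℝ :=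
  if h : ρ.IsHermitian then -∑ i, h.eigenvalues i * Real.logb 2 (h.eigenvalues i) else 0

/-- The diagonal part of a matrix. -/
def diagPart {n : Type*} [Fintype n] [DecidableEq n] (ρ : Matrix n n ℂ) : Matrix n n ℂ :=
  Matrix.diagonal fun i => ρ i i

/-- Relative entropy of coherence in the computational basis. -/
noncomputable def relEntCoh {n : Type*} [Fintype n] [DecidableEq n] (ρ : Matrix n n ℂ) : ℝ :=
  vnEntropy (diagPart ρ) - vnEntropy ρ

/-- A density matrix: positive semidefinite with trace one. -/
def IsDensity {n : Type*} [Fintype n] [DecidableEq n] (ρ : Matrix n n ℂ) : Prop :=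
  ρ.PosSemidef ∧ ρ.trace = 1

/-- Two-qubit index type: the first component is qubit A, the second is qubit B. -/
abbrev Q2 := Fin 2 × Fin 2

/-- Z-parity projector Π⁺ = |00⟩⟨00| + |11⟩⟨11|. -/
def PiPlus : Matrix Q2 Q2 ℂ := Matrix.diagonal fun i => if i.1 = i.2 then 1 else 0

/-- Z-parity projector Π⁻ = |01⟩⟨01| + |10⟩⟨10|. -/
def PiMinus : Matrix Q2 Q2 ℂ := Matrix.diagonal fun i => if i.1 = i.2 then 0 else 1

/-- Partial dephasing channel Φ(ρ) = Π⁺ρΠ⁺ + Π⁻ρΠ⁻. -/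
def dephase (ρ : Matrix Q2 Q2 ℂ) : Matrix Q2 Q2 ℂ :=
  PiPlus * ρ * PiPlus + PiMinus * ρ * PiMinus

/-- Binary entropy (base 2). -/
noncomputable def binEnt (e : ℝ) : ℝ := -(e * Real.logb 2 e) - (1 - e) * Real.logb 2 (1 - e)

/-- X-basis projector Π_x⁻ = |+−⟩⟨+−| + |−+⟩⟨−+|, written entrywise. -/
def PiXMinus : Matrix Q2 Q2 ℂ :=
  Matrix.of fun i j => (1/4 : ℂ) *
    ((if i.1 = j.1 then 1 else -1) + (if i.2 = j.2 then 1 else -1))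

/-- phase i^a for a : Fin 2 -/
def yph : Fin 2 → ℂ := fun a => if a = 0 then 1 else Complex.I

/-- Y-basis projector Π_y⁻ = |+i,+i⟩⟨+i,+i| + |−i,−i⟩⟨−i,−i|, written entrywise. -/
def PiYMinus : Matrix Q2 Q2 ℂ :=
  Matrix.of fun i j => (1/4 : ℂ) *
    (yph i.1 * yph i.2 * star (yph j.1) * star (yph j.2)
      + star (yph i.1) * star (yph i.2) * yph j.1 * yph j.2)

/-- The matrix ρ(a,b): diagonal (m00,m11,m22,m33), entry a between |00⟩,|11⟩,
entry b between |01⟩,|10⟩, zeros elsewhere. -/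
def rhoGen (m00 m11 m22 m33 a b : ℝ) : Matrix Q2 Q2 ℂ :=
  Matrix.of fun i j =>
    if i = j then
      (if i = (0, 0) then (m00 : ℂ) else if i = (0, 1) then (m11 : ℂ)
        else if i = (1, 0) then (m22 : ℂ) else (m33 : ℂ))
    else if (i = ((0 : Fin 2), (0 : Fin 2)) ∧ j = (1, 1)) ∨ (i = (1, 1) ∧ j = (0, 0)) then (a : ℂ)
    else if (i = ((0 : Fin 2), (1 : Fin 2)) ∧ j = (1, 0)) ∨ (i = (1, 0) ∧ j = (0, 1)) then (b : ℂ)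
    else 0

/-- The Bell-diagonal state with weights p0,p1,p2,p3 on |Φ⁺⟩,|Φ⁻⟩,|Ψ⁺⟩,|Ψ⁻⟩. -/
def bellDiag (p0 p1 p2 p3 : ℝ) : Matrix Q2 Q2 ℂ :=
  rhoGen ((p0 + p1)/2) ((p2 + p3)/2) ((p2 + p3)/2) ((p0 + p1)/2) ((p0 - p1)/2) ((p2 - p3)/2)

/-- Partial trace over the first qubit (A). -/
def trA (M : Matrix Q2 Q2 ℂ) : Matrix (Fin 2) (Fin 2) ℂ :=
  Matrix.of fun j j' => ∑ i : Fin 2, M (i, j) (i, j')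

/-- Partial trace over the second qubit (B). -/
def trB (M : Matrix Q2 Q2 ℂ) : Matrix (Fin 2) (Fin 2) ℂ :=
  Matrix.of fun i i' => ∑ j : Fin 2, M (i, j) (i', j)

/-- Coherence-based key-rate functional K(ρ) = C(Φ(ρ)) − H(Tr(Π⁻ρ)). -/
noncomputable def keyRate (ρ : Matrix Q2 Q2 ℂ) : ℝ :=
  relEntCoh (dephase ρ) - binEnt ((PiMinus * ρ).trace.re)

/-- Outer product |ψ⟩⟨ψ|. -/
def outer (ψ : Q2 → ℂ) : Matrix Q2 Q2 ℂ := Matrix.of fun i j => ψ i * star (ψ j)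

/-- Basis-optimized key rate: supremum of K over all local basis changes. -/
noncomputable def Km (ρ : Matrix Q2 Q2 ℂ) : ℝ :=
  sSup {x : ℝ | ∃ U V : Matrix (Fin 2) (Fin 2) ℂ, U ∈ Matrix.unitaryGroup (Fin 2) ℂ ∧
    V ∈ Matrix.unitaryGroup (Fin 2) ℂ ∧ x = keyRate ((U ⊗ₖ V) * ρ * (U ⊗ₖ V)ᴴ)}


/-! ### Superadditivity of the binary entropy deficit -/

/-- Twice the entropy deficit `log 2 - h((1 + x)/2)`, with `h` the binary entropy in nats. -/
def deficit (x : ℝ) : ℝ := (1 + x) * Real.log (1 + x) + (1 - x) * Real.log (1 - x)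

/-- `deficit` is a power series in `x ^ 2` with positive coefficients and no constant term. -/
lemma hasSum_deficit {x : ℝ} (hx : |x| < 1) :
    HasSum (fun k : ℕ => (x ^ 2) ^ (k + 1) / ((2 * k + 1) * (k + 1))) (deficit x) := by
  have hsq : |x ^ 2| < 1 := by
    rw [abs_pow]
    exact pow_lt_one₀ (abs_nonneg x) hx two_ne_zero
  have hodd := (Real.hasSum_log_sub_log_of_abs_lt_one hx).mul_left x
  have heven := Real.hasSum_pow_div_log_of_abs_lt_one hsq
  obtain ⟨hlo, hhi⟩ := abs_lt.mp hx
  have hlog : Real.log (1 - x ^ 2) = Real.log (1 + x) + Real.log (1 - x) := by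
    rw [← Real.log_mul (by linarith) (by linarith)]
    congr 1
    ring
  have hval : deficit x
      = x * (Real.log (1 + x) - Real.log (1 - x)) - -Real.log (1 - x ^ 2) := by
    rw [hlog, deficit]
    ring
  rw [hval]
  have hcoeff (k : ℕ) : (x ^ 2) ^ (k + 1) / ((2 * k + 1) * (k + 1))
      = x * (2 * (1 / (2 * k + 1)) * x ^ (2 * k + 1)) - (x ^ 2) ^ (k + 1) / (k + 1) := by
    have h1 : (2 * (k : ℝ) + 1) ≠ 0 := by positivity
    have h2 : ((k : ℝ) + 1) ≠ 0 := by positivity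
    field_simp
    ring
  simp_rw [hcoeff]
  exact hodd.sub heven

lemma continuous_deficit : Continuous deficit := by
  unfold deficit
  exact (Real.continuous_mul_log.comp (continuous_const.add continuous_id)).add
    (Real.continuous_mul_log.comp (continuous_const.sub continuous_id))

lemma deficit_add_le_of_lt_one {u r v : ℝ} (h : u ^ 2 + r ^ 2 ≤ v ^ 2) (hv : |v| < 1) :
    deficit u + deficit r ≤ deficit v := by
  have hu : |u| < 1 := lt_of_le_of_lt (sq_le_sq.mp (by nlinarith [sq_nonneg r])) hv
  have hr : |r| < 1 := lt_of_le_of_lt (sq_le_sq.mp (by nlinarith [sq_nonneg u])) hv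
  refine hasSum_le (fun k => ?_) ((hasSum_deficit hu).add (hasSum_deficit hr)) (hasSum_deficit hv)
  rw [← add_div]
  gcongr
  exact (pow_add_pow_le (sq_nonneg u) (sq_nonneg r) k.succ_ne_zero).trans
    (pow_le_pow_left₀ (by positivity) h _)

/-- The boundary case `|v| = 1` (a rank-deficient block) follows by scaling the arguments by
`t < 1` and letting `t` tend to `1`. -/
lemma deficit_add_le {u r v : ℝ} (h : u ^ 2 + r ^ 2 ≤ v ^ 2) (hv : |v| ≤ 1) :
    deficit u + deficit r ≤ deficit v := by
  have hlim (x : ℝ) : Filter.Tendsto (fun t : ℝ => deficit (t * x)) (nhdsWithin 1 (Set.Iio 1))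
      (nhds (deficit x)) := by
    have hc : Continuous fun t : ℝ => deficit (t * x) :=
      continuous_deficit.comp (continuous_id.mul continuous_const)
    simpa using (hc.tendsto 1).mono_left nhdsWithin_le_nhds
  refine le_of_tendsto_of_tendsto ((hlim u).add (hlim r)) (hlim v) ?_
  filter_upwards [Ioo_mem_nhdsLT (zero_lt_one (α := ℝ))] with t ht
  refine deficit_add_le_of_lt_one ?_ ?_
  · nlinarith [mul_le_mul_of_nonneg_left h (sq_nonneg t)]
  · rw [abs_mul, abs_of_pos ht.1]
    nlinarith [ht.1, ht.2, abs_nonneg v]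

/-- The entropy summand without its sign, `x log₂ x`. -/
def xlog (x : ℝ) : ℝ := x * Real.logb 2 x

lemma xlog_mul {x y : ℝ} (hx : x ≠ 0) : xlog (x * y) = y * xlog x + x * xlog y := by
  by_cases hy : y = 0
  · simp [hy, xlog]
  · simp only [xlog, Real.logb_mul hx hy]
    ring

lemma xlog_half (s : ℝ) : 2 * xlog (s / 2) = xlog s - s := by
  have h := xlog_mul (x := (1 / 2 : ℝ)) (y := s) (by norm_num)
  have h2 : xlog (1 / 2) = -(1 / 2) := by
    simp [xlog, Real.logb_inv]
  rw [h2] at h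
  rw [show s / 2 = 1 / 2 * s by ring, h]
  ring

lemma xlog_pair (x : ℝ) : xlog (1 + x) + xlog (1 - x) = deficit x / Real.log 2 := by
  simp only [xlog, deficit, Real.logb]
  ring

/-- The inequality for one parity block: `2 * m` is the weight of the block, `m ± u` are its
diagonal entries, `m ± v` its eigenvalues, and `m ± r` the corresponding Bell weights. -/
lemma xlog_block_le {m u r v : ℝ} (h : u ^ 2 + r ^ 2 ≤ v ^ 2) (hv : |v| ≤ m) :
    xlog (m + u) + xlog (m - u) + (xlog (m + r) + xlog (m - r))
      ≤ xlog (m + v) + xlog (m - v) + 2 * xlog m := by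
  rcases ((abs_nonneg v).trans hv).eq_or_lt with hm | hm
  · have hv0 : v = 0 := abs_nonpos_iff.mp (hm ▸ hv)
    have hu0 : u = 0 := by
      subst hv0
      nlinarith [sq_nonneg u, sq_nonneg r]
    have hr0 : r = 0 := by
      subst hv0
      nlinarith [sq_nonneg u, sq_nonneg r]
    simp [hv0, hu0, hr0]
    linarith
  · have key : deficit (u / m) + deficit (r / m) ≤ deficit (v / m) := by
      refine deficit_add_le ?_ ?_
      · simp only [div_pow, ← add_div]
        gcongr
      · rw [abs_div, abs_of_pos hm]
        exact (div_le_one hm).mpr hv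
    have hscale (x : ℝ) : xlog (m + x) + xlog (m - x)
        = 2 * xlog m + m * (deficit (x / m) / Real.log 2) := by
      rw [← xlog_pair, show m + x = m * (1 + x / m) by field_simp,
        show m - x = m * (1 - x / m) by field_simp, xlog_mul hm.ne', xlog_mul hm.ne']
      ring
    have h2 : 0 < Real.log 2 := Real.log_pos (by norm_num)
    have hkey := mul_le_mul_of_nonneg_left (div_le_div_of_nonneg_right key h2.le) hm.le
    rw [add_div, mul_add] at hkey
    rw [hscale u, hscale r, hscale v]
    linarith

/-! ### Entropies of the dephased state -/

lemma vnEntropy_eq_roots {n : Type*} [Fintype n] [DecidableEq n] {M : Matrix n n ℂ}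
    (hM : M.IsHermitian) : vnEntropy M = -(M.charpoly.roots.map fun z => xlog z.re).sum := by
  rw [vnEntropy, dif_pos hM, hM.roots_charpoly_eq_eigenvalues]
  rw [Multiset.map_map]
  rfl

/-- The two parity sectors `{00, 11}` and `{01, 10}` as the summands of `Fin 2 ⊕ Fin 2`. -/
def parityEquiv : Q2 ≃ Fin 2 ⊕ Fin 2 where
  toFun i := if i.1 = i.2 then Sum.inl i.1 else Sum.inr i.1
  invFun := Sum.elim (fun i => (i, i)) (fun i => (i, 1 - i))
  left_inv := by decide
  right_inv := by decide

lemma reindex_dephase (M : Matrix Q2 Q2 ℂ) :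
    Matrix.reindex parityEquiv parityEquiv (dephase M) =
      Matrix.fromBlocks (Matrix.of fun i j => M (i, i) (j, j)) 0 0
        (Matrix.of fun i j => M (i, 1 - i) (j, 1 - j)) := by
  ext i j
  rcases i with i | i <;> rcases j with j | j <;> fin_cases i <;> fin_cases j <;>
    simp [parityEquiv, dephase, PiPlus, PiMinus]

/-- A Hermitian 2×2 matrix with diagonal `a, d` and off-diagonal entry `c` has eigenvalues
`(a + d)/2 ± v`, where `v² = ((a - d)/2)² + |c|²`. -/
lemma charpoly_block {M : Matrix (Fin 2) (Fin 2) ℂ} {a d v : ℝ} (ha : M 0 0 = a) (hd : M 1 1 = d)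
    (hc : M 1 0 = star (M 0 1)) (hv : v ^ 2 = ((a - d) / 2) ^ 2 + Complex.normSq (M 0 1)) :
    M.charpoly = (Polynomial.X - Polynomial.C (((a + d) / 2 + v : ℝ) : ℂ)) *
      (Polynomial.X - Polynomial.C (((a + d) / 2 - v : ℝ) : ℂ)) := by
  have htr : M.trace = (((a + d) / 2 + v : ℝ) : ℂ) + (((a + d) / 2 - v : ℝ) : ℂ) := by
    rw [Matrix.trace_fin_two, ha, hd]
    push_cast
    ring
  have hdet : M.det = (((a + d) / 2 + v : ℝ) : ℂ) * (((a + d) / 2 - v : ℝ) : ℂ) := by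
    have hn : M 0 1 * star (M 0 1) = (Complex.normSq (M 0 1) : ℂ) := Complex.mul_conj _
    rw [Matrix.det_fin_two, ha, hd, hc, hn,
      show Complex.normSq (M 0 1) = v ^ 2 - ((a - d) / 2) ^ 2 by linarith]
    push_cast
    ring
  rw [Matrix.charpoly_fin_two, htr, hdet, Polynomial.C_add, Polynomial.C_mul]
  ring

lemma isHermitian_dephase {M : Matrix Q2 Q2 ℂ} (hM : M.IsHermitian) :
    (dephase M).IsHermitian := by
  have hP : PiPlusᴴ = PiPlus := by
    ext i j
    fin_cases i <;> fin_cases j <;> simp [PiPlus]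
  have hQ : PiMinusᴴ = PiMinus := by
    ext i j
    fin_cases i <;> fin_cases j <;> simp [PiMinus]
  have h1 := Matrix.isHermitian_mul_mul_conjTranspose PiPlus hM
  have h2 := Matrix.isHermitian_mul_mul_conjTranspose PiMinus hM
  rw [hP] at h1
  rw [hQ] at h2
  exact h1.add h2

/-- Closed form of the coherence of the dephased state, with `v` and `w` the half-gaps of the
eigenvalues of the even and odd parity blocks. -/
lemma relEntCoh_dephase {M : Matrix Q2 Q2 ℂ} (hM : M.IsHermitian) {a b g d v w : ℝ}
    (ha : M (0, 0) (0, 0) = a) (hb : M (0, 1) (0, 1) = b) (hg : M (1, 0) (1, 0) = g)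
    (hd : M (1, 1) (1, 1) = d)
    (hv : v ^ 2 = ((a - d) / 2) ^ 2 + Complex.normSq (M (0, 0) (1, 1)))
    (hw : w ^ 2 = ((b - g) / 2) ^ 2 + Complex.normSq (M (0, 1) (1, 0))) :
    relEntCoh (dephase M) =
      (xlog ((a + d) / 2 + v) + xlog ((a + d) / 2 - v)
        + (xlog ((b + g) / 2 + w) + xlog ((b + g) / 2 - w)))
      - (xlog a + xlog d + (xlog b + xlog g)) := by
  have hchar : (dephase M).charpoly =
      ([((a + d) / 2 + v : ℝ), (a + d) / 2 - v, (b + g) / 2 + w, (b + g) / 2 - w].map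
        fun t : ℝ => Polynomial.X - Polynomial.C (t : ℂ)).prod := by
    rw [← Matrix.charpoly_reindex parityEquiv, reindex_dephase,
      Matrix.charpoly_fromBlocks_zero₁₂,
      charpoly_block (a := a) (d := d) (v := v) (by simpa using ha) (by simpa using hd)
        (by simpa using (hM.apply (1, 1) (0, 0)).symm) (by simpa using hv),
      charpoly_block (a := b) (d := g) (v := w) (by simpa using hb) (by simpa using hg)
        (by simpa using (hM.apply (1, 0) (0, 1)).symm) (by simpa using hw)]
    simp [mul_assoc]
  have hroots : (dephase M).charpoly.roots =
      Multiset.map (fun t : ℝ => (t : ℂ))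
        ↑[((a + d) / 2 + v : ℝ), (a + d) / 2 - v, (b + g) / 2 + w, (b + g) / 2 - w] := by
    rw [hchar, ← Polynomial.roots_multiset_prod_X_sub_C (Multiset.map (fun t : ℝ => (t : ℂ)) _)]
    simp
  have hS : vnEntropy (dephase M) =
      -(xlog ((a + d) / 2 + v) + xlog ((a + d) / 2 - v)
        + (xlog ((b + g) / 2 + w) + xlog ((b + g) / 2 - w))) := by
    rw [vnEntropy_eq_roots (isHermitian_dephase hM), hroots, Multiset.map_map, Multiset.map_coe,
      Multiset.sum_coe]
    simp only [List.map_cons, List.map_nil, List.sum_cons, List.sum_nil, Function.comp_apply,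
      Complex.ofReal_re]
    ring
  have hdiag : diagPart (dephase M) = Matrix.diagonal fun i => M i i := by
    ext i j
    fin_cases i <;> fin_cases j <;> simp [diagPart, dephase, PiPlus, PiMinus]
  have hdH : (Matrix.diagonal fun i => M i i).IsHermitian :=
    Matrix.isHermitian_diagonal_of_self_adjoint _ (by
      ext i
      exact hM.apply i i)
  have hD : vnEntropy (diagPart (dephase M)) = -(xlog a + xlog d + (xlog b + xlog g)) := by
    rw [hdiag, vnEntropy_eq_roots hdH, Matrix.charpoly_diagonal]
    have hr : (∏ i : Q2, (Polynomial.X - Polynomial.C (M i i))).roots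
        = Multiset.map (fun i : Q2 => M i i) Finset.univ.val := by
      rw [← Polynomial.roots_multiset_prod_X_sub_C (Multiset.map (fun i : Q2 => M i i) _),
        Multiset.map_map]
      rfl
    rw [hr, Multiset.map_map]
    change -(∑ i : Q2, xlog (M i i).re) = _
    simp only [Fintype.sum_prod_type, Fin.sum_univ_two, ha, hb, hg, hd, Complex.ofReal_re]
    ring
  rw [relEntCoh, hD, hS]
  ring

/-! ### The observed error rates -/

lemma trace_PiXMinus (M : Matrix Q2 Q2 ℂ) : (PiXMinus * M).trace =
    (M.trace - (M (0, 0) (1, 1) + M (1, 1) (0, 0)) - (M (0, 1) (1, 0) + M (1, 0) (0, 1))) / 2 := by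
  simp [Matrix.trace, Matrix.mul_apply, Fintype.sum_prod_type, Fin.sum_univ_two, PiXMinus]
  ring

lemma trace_PiYMinus (M : Matrix Q2 Q2 ℂ) : (PiYMinus * M).trace =
    (M.trace - (M (0, 0) (1, 1) + M (1, 1) (0, 0)) + (M (0, 1) (1, 0) + M (1, 0) (0, 1))) / 2 := by
  simp [Matrix.trace, Matrix.mul_apply, Fintype.sum_prod_type, Fin.sum_univ_two, PiYMinus, yph]
  ring_nf

lemma trace_PiMinus (M : Matrix Q2 Q2 ℂ) :
    (PiMinus * M).trace = M (0, 1) (0, 1) + M (1, 0) (1, 0) := by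
  simp [Matrix.trace, Fintype.sum_prod_type, Fin.sum_univ_two, PiMinus]

/-- Nonnegativity of the principal minors on the indices `i`, `j`. -/
lemma normSq_le_of_posSemidef {M : Matrix Q2 Q2 ℂ} (hM : M.PosSemidef) {i j : Q2} {a d : ℝ}
    (ha : M i i = a) (hd : M j j = d) :
    0 ≤ a ∧ 0 ≤ d ∧ Complex.normSq (M i j) ≤ a * d := by
  refine ⟨?_, ?_, ?_⟩
  · have h := hM.diag_nonneg (i := i)
    rw [ha] at h
    exact_mod_cast h
  · have h := hM.diag_nonneg (i := j)
    rw [hd] at h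
    exact_mod_cast h
  · have h := (hM.submatrix ![i, j]).det_nonneg
    have hn : M i j * star (M i j) = (Complex.normSq (M i j) : ℂ) := Complex.mul_conj _
    rw [Matrix.det_fin_two] at h
    simp only [Matrix.submatrix_apply, Matrix.cons_val_zero, Matrix.cons_val_one] at h
    rw [ha, hd, ← hM.1.apply j i, hn] at h
    have h' : (0 : ℂ) ≤ ((a * d - Complex.normSq (M i j) : ℝ) : ℂ) := by
      push_cast
      exact h
    have := Complex.zero_le_real.mp h'
    linarith

lemma posSemidef_bellDiag {p0 p1 p2 p3 : ℝ} (h0 : 0 ≤ p0) (h1 : 0 ≤ p1) (h2 : 0 ≤ p2)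
    (h3 : 0 ≤ p3) : (bellDiag p0 p1 p2 p3).PosSemidef := by
  -- The rank-one terms are the unnormalized Bell projectors, hence the weights `p / 2`.
  have hterm {p : ℝ} (hp : 0 ≤ p) (ψ : Q2 → ℂ) :
      (((p / 2 : ℝ) : ℂ) • Matrix.vecMulVec ψ (star ψ)).PosSemidef :=
    (Matrix.posSemidef_vecMulVec_self_star ψ).smul (Complex.zero_le_real.mpr (by positivity))
  convert (((hterm h0 fun i => if i.1 = i.2 then 1 else 0).add
    (hterm h1 fun i => if i.1 = i.2 then (if i.1 = 0 then 1 else -1) else 0)).add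
    (hterm h2 fun i => if i.1 = i.2 then 0 else 1)).add
    (hterm h3 fun i => if i.1 = i.2 then 0 else (if i.1 = 0 then 1 else -1)) using 1
  ext i j
  fin_cases i <;> fin_cases j <;>
    simp [bellDiag, rhoGen, Matrix.vecMulVec_apply] <;> ring

/-- The parity blocks of a Bell-diagonal state have equal diagonal entries, so the half-gaps of
their eigenvalues are the off-diagonal entries. -/
lemma relEntCoh_dephase_bellDiag {p0 p1 p2 p3 : ℝ} (hH : (bellDiag p0 p1 p2 p3).IsHermitian) :
    relEntCoh (dephase (bellDiag p0 p1 p2 p3)) = xlog p0 + xlog p1 + (xlog p2 + xlog p3)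
      - (2 * xlog ((p0 + p1) / 2) + 2 * xlog ((p2 + p3) / 2)) := by
  have hc : bellDiag p0 p1 p2 p3 (0, 0) (1, 1) = (((p0 - p1) / 2 : ℝ) : ℂ) := by
    simp [bellDiag, rhoGen]
  have hf : bellDiag p0 p1 p2 p3 (0, 1) (1, 0) = (((p2 - p3) / 2 : ℝ) : ℂ) := by
    simp [bellDiag, rhoGen]
  have hv : ((p0 - p1) / 2) ^ 2 = (((p0 + p1) / 2 - (p0 + p1) / 2) / 2) ^ 2
      + Complex.normSq (bellDiag p0 p1 p2 p3 (0, 0) (1, 1)) := by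
    rw [hc, Complex.normSq_ofReal]
    ring
  have hw : ((p2 - p3) / 2) ^ 2 = (((p2 + p3) / 2 - (p2 + p3) / 2) / 2) ^ 2
      + Complex.normSq (bellDiag p0 p1 p2 p3 (0, 1) (1, 0)) := by
    rw [hf, Complex.normSq_ofReal]
    ring
  rw [relEntCoh_dephase hH (by simp [bellDiag, rhoGen]) (by simp [bellDiag, rhoGen])
    (by simp [bellDiag, rhoGen]) (by simp [bellDiag, rhoGen]) hv hw]
  ring_nf

/-- The lower bound: `xlog_block_le` applied to both parity blocks. -/
lemma keyRate_lower_bound {ex ey ez p0 p1 p2 p3 : ℝ} (hp0 : p0 = (2 - ex - ey - ez) / 2)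
    (hp1 : p1 = (ex + ey - ez) / 2) (hp2 : p2 = (ey + ez - ex) / 2)
    (hp3 : p3 = (ez + ex - ey) / 2) {ρ : Matrix Q2 Q2 ℂ} (hρ : IsDensity ρ)
    (hx : (PiXMinus * ρ).trace = (ex : ℂ)) (hy : (PiYMinus * ρ).trace = (ey : ℂ))
    (hz : (PiMinus * ρ).trace = (ez : ℂ)) :
    1 - (-(p0 * Real.logb 2 p0) - p1 * Real.logb 2 p1 - p2 * Real.logb 2 p2
      - p3 * Real.logb 2 p3) ≤ relEntCoh (dephase ρ) - binEnt ez := by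
  have hH := hρ.1.1
  have hreal (i : Q2) : ρ i i = ((ρ i i).re : ℂ) := (Complex.conj_eq_iff_re.mp (hH.apply i i)).symm
  have hc := hH.apply (1, 1) (0, 0)
  have hf := hH.apply (1, 0) (0, 1)
  rw [trace_PiXMinus, hρ.2, ← hc, ← hf] at hx
  rw [trace_PiYMinus, hρ.2, ← hc, ← hf] at hy
  rw [trace_PiMinus] at hz
  have htr := hρ.2
  simp only [Matrix.trace, Matrix.diag_apply, Fintype.sum_prod_type, Fin.sum_univ_two] at htr
  replace hx := congrArg Complex.re hx
  replace hy := congrArg Complex.re hy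
  replace hz := congrArg Complex.re hz
  replace htr := congrArg Complex.re htr
  simp at hx hy hz htr
  obtain ⟨ha, hd, hcn⟩ := normSq_le_of_posSemidef hρ.1 (hreal (0, 0)) (hreal (1, 1))
  obtain ⟨hb, hg, hfn⟩ := normSq_le_of_posSemidef hρ.1 (hreal (0, 1)) (hreal (1, 0))
  have hcn' := Complex.normSq_apply (ρ (0, 0) (1, 1))
  have hfn' := Complex.normSq_apply (ρ (0, 1) (1, 0))
  have hv := Real.sq_sqrt (add_nonneg
    (sq_nonneg (((ρ (0, 0) (0, 0)).re - (ρ (1, 1) (1, 1)).re) / 2))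
    (Complex.normSq_nonneg (ρ (0, 0) (1, 1))))
  have hw := Real.sq_sqrt (add_nonneg
    (sq_nonneg (((ρ (0, 1) (0, 1)).re - (ρ (1, 0) (1, 0)).re) / 2))
    (Complex.normSq_nonneg (ρ (0, 1) (1, 0))))
  rw [relEntCoh_dephase hH (hreal _) (hreal _) (hreal _) (hreal _) hv hw]
  generalize √_ = v at hv ⊢
  generalize √_ = w at hw ⊢
  generalize (ρ (0, 0) (0, 0)).re = a at *
  generalize (ρ (1, 1) (1, 1)).re = d at *
  generalize (ρ (0, 1) (0, 1)).re = b at *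
  generalize (ρ (1, 0) (1, 0)).re = g at *
  have hA := xlog_block_le (m := (a + d) / 2) (u := (a - d) / 2) (r := (ρ (0, 0) (1, 1)).re)
    (v := v) (by nlinarith [sq_nonneg (ρ (0, 0) (1, 1)).im])
    (abs_le_of_sq_le_sq (by nlinarith) (by linarith))
  have hB := xlog_block_le (m := (b + g) / 2) (u := (b - g) / 2) (r := (ρ (0, 1) (1, 0)).re)
    (v := w) (by nlinarith [sq_nonneg (ρ (0, 1) (1, 0)).im])
    (abs_le_of_sq_le_sq (by nlinarith) (by linarith))
  rw [show (a + d) / 2 + (a - d) / 2 = a by ring, show (a + d) / 2 - (a - d) / 2 = d by ring,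
    show (a + d) / 2 + (ρ (0, 0) (1, 1)).re = p0 by linarith,
    show (a + d) / 2 - (ρ (0, 0) (1, 1)).re = p1 by linarith, xlog_half] at hA
  rw [show (b + g) / 2 + (b - g) / 2 = b by ring, show (b + g) / 2 - (b - g) / 2 = g by ring,
    show (b + g) / 2 + (ρ (0, 1) (1, 0)).re = p2 by linarith,
    show (b + g) / 2 - (ρ (0, 1) (1, 0)).re = p3 by linarith, xlog_half] at hB
  have had : a + d = 1 - ez := by linarith
  rw [hz] at hB ⊢
  rw [had] at hA ⊢
  simp only [xlog, binEnt] at *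
  linarith

/-- six-state key rate via coherence. -/
theorem stmt_3 (ex ey ez : ℝ) (hex0 : 0 ≤ ex) (hex1 : ex ≤ 1) (hey0 : 0 ≤ ey) (hey1 : ey ≤ 1)
    (hez0 : 0 ≤ ez) (hez1 : ez ≤ 1)
    (p0 p1 p2 p3 : ℝ) (hp0 : p0 = (2 - ex - ey - ez)/2) (hp1 : p1 = (ex + ey - ez)/2)
    (hp2 : p2 = (ey + ez - ex)/2) (hp3 : p3 = (ez + ex - ey)/2)
    (h0 : 0 ≤ p0) (h1 : 0 ≤ p1) (h2 : 0 ≤ p2) (h3 : 0 ≤ p3) :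
    (∀ ρ : Matrix Q2 Q2 ℂ, IsDensity ρ → (PiXMinus * ρ).trace = (ex : ℂ) →
      (PiYMinus * ρ).trace = (ey : ℂ) → (PiMinus * ρ).trace = (ez : ℂ) →
      1 - (-(p0 * Real.logb 2 p0) - p1 * Real.logb 2 p1 - p2 * Real.logb 2 p2
          - p3 * Real.logb 2 p3) ≤ relEntCoh (dephase ρ) - binEnt ez) ∧
    (IsDensity (bellDiag p0 p1 p2 p3) ∧
      (PiXMinus * bellDiag p0 p1 p2 p3).trace = (ex : ℂ) ∧
      (PiYMinus * bellDiag p0 p1 p2 p3).trace = (ey : ℂ) ∧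
      (PiMinus * bellDiag p0 p1 p2 p3).trace = (ez : ℂ) ∧
      relEntCoh (dephase (bellDiag p0 p1 p2 p3)) - binEnt ez
        = 1 - (-(p0 * Real.logb 2 p0) - p1 * Real.logb 2 p1 - p2 * Real.logb 2 p2
            - p3 * Real.logb 2 p3)) ∧
    IsLeast {x : ℝ | ∃ ρ : Matrix Q2 Q2 ℂ, IsDensity ρ ∧ (PiXMinus * ρ).trace = (ex : ℂ) ∧
        (PiYMinus * ρ).trace = (ey : ℂ) ∧ (PiMinus * ρ).trace = (ez : ℂ) ∧
        x = relEntCoh (dephase ρ) - binEnt ez}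
      (1 - (-(p0 * Real.logb 2 p0) - p1 * Real.logb 2 p1 - p2 * Real.logb 2 p2
          - p3 * Real.logb 2 p3)) := by
  have hlower : ∀ ρ : Matrix Q2 Q2 ℂ, IsDensity ρ → (PiXMinus * ρ).trace = (ex : ℂ) →
      (PiYMinus * ρ).trace = (ey : ℂ) → (PiMinus * ρ).trace = (ez : ℂ) →
      1 - (-(p0 * Real.logb 2 p0) - p1 * Real.logb 2 p1 - p2 * Real.logb 2 p2
          - p3 * Real.logb 2 p3) ≤ relEntCoh (dephase ρ) - binEnt ez :=
    fun ρ hρ hx hy hz => keyRate_lower_bound hp0 hp1 hp2 hp3 hρ hx hy hz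
  have hPSD := posSemidef_bellDiag h0 h1 h2 h3
  have htr : (bellDiag p0 p1 p2 p3).trace = 1 := by
    simp [Matrix.trace, Fintype.sum_prod_type, Fin.sum_univ_two, bellDiag, rhoGen,
      hp0, hp1, hp2, hp3]
    ring
  have hX : (PiXMinus * bellDiag p0 p1 p2 p3).trace = (ex : ℂ) := by
    rw [trace_PiXMinus, htr]
    simp [bellDiag, rhoGen, hp0, hp1, hp2, hp3]
    ring
  have hY : (PiYMinus * bellDiag p0 p1 p2 p3).trace = (ey : ℂ) := by
    rw [trace_PiYMinus, htr]
    simp [bellDiag, rhoGen, hp0, hp1, hp2, hp3]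
    ring
  have hZ : (PiMinus * bellDiag p0 p1 p2 p3).trace = (ez : ℂ) := by
    rw [trace_PiMinus]
    simp [bellDiag, rhoGen, hp2, hp3]
    ring
  have heq : relEntCoh (dephase (bellDiag p0 p1 p2 p3)) - binEnt ez
        = 1 - (-(p0 * Real.logb 2 p0) - p1 * Real.logb 2 p1 - p2 * Real.logb 2 p2
            - p3 * Real.logb 2 p3) := by
    rw [relEntCoh_dephase_bellDiag hPSD.1]
    have hA := xlog_half (p0 + p1)
    have hB := xlog_half (p2 + p3)
    rw [show p0 + p1 = 1 - ez by linarith] at hA ⊢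
    rw [show p2 + p3 = ez by linarith] at hB ⊢
    simp only [xlog, binEnt] at *
    linarith
  refine ⟨hlower, ⟨⟨hPSD, htr⟩, hX, hY, hZ, heq⟩,
    ⟨_, ⟨hPSD, htr⟩, hX, hY, hZ, heq.symm⟩, ?_⟩
  rintro x ⟨ρ, hρ, hx, hy, hz, rfl⟩
  exact hlower ρ hρ hx hy hz

end
end

section
/- Fix nonnegative reals m₀₀, m₁₁, m₂₂, m₃₃ summing to 1, set e_b = m₁₁ + m₂₂, and fix e_p ∈ [0,1]. Then for all real numbers a, b with a + b = 1/2 − e_p, |a| ≤ √(m₀₀m₃₃) and |b| ≤ √(m₁₁m₂₂), the density matrix ρ(a,b) satisfies C(ρ(a,b)) ≥ 1 − H(e_p). Consequently the improved BB84 key rate is never smaller than the Shor–Preskill rate: min_{a,b} C(ρ(a,b)) − H(e_b) ≥ 1 − H(e_p) − H(e_b). -/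
/-!
The matrix `ρ(a,b)` is a direct sum of two 2×2 blocks, of traces `s = m00 + m33` and
`t = m11 + m22`. A block with diagonal `p, q` and off-diagonal entry `a` has eigenvalues
`(p + q ± R) / 2` with `R² = (p - q)² + 4a²`.

Put `f(x) = log 2 - h((1 + x) / 2)`, where `h` is the binary entropy in nats. After division by the
trace `s = p + q`, the coherence of a block is `f(R / s) - f((p - q) / s)`. Since `f` is a power
series in `x²` with nonnegative coefficients and no constant term (`hasSum_binEntropy_defect`), it
is superadditive in `x²` (`binEntropy_superadd`), so this difference is at least
`f(2a / s) = log 2 - h(1/2 + a / s)` (`block_le`).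

Adding the two blocks with weights `s + t = 1`, concavity of `h` (`concave_mix`) gives
`C(ρ(a,b)) ≥ log 2 - h(1/2 + a + b) = log 2 - h(1 - ep) = log 2 - h(ep)`, in nats.
The eigenvalues of `ρ(a,b)` are read off from its characteristic polynomial (`rhoGen_charpoly`).
-/

open Matrix Complex Kronecker
open scoped ComplexOrder

noncomputable section

/-- The power series of `log 2 - h((1 + x) / 2)`: it runs over powers of `x ^ 2` without constant
term, and all its coefficients are positive. -/
lemma hasSum_binEntropy_defect {x : ℝ} (hx : |x| < 1) :
    HasSum (fun n : ℕ => (x ^ 2) ^ (n + 1) * (1 / (2 * (2 * n + 1) * (n + 1))))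
      (Real.log 2 - Real.binEntropy ((1 + x) / 2)) := by
  have hx' := abs_lt.1 hx
  have h1 := Real.hasSum_log_sub_log_of_abs_lt_one hx
  have h2 := Real.hasSum_pow_div_log_of_abs_lt_one
    (show |x ^ 2| < 1 by rw [abs_pow]; exact pow_lt_one₀ (abs_nonneg _) hx two_ne_zero)
  have h3 := ((h1.mul_left x).sub h2).mul_left (1 / 2)
  have hf : (fun n : ℕ => (x ^ 2) ^ (n + 1) * (1 / (2 * (2 * (n : ℝ) + 1) * (n + 1)))) =
      fun n : ℕ => 1 / 2 * (x * (2 * (1 / (2 * (n : ℝ) + 1)) * x ^ (2 * n + 1)) -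
        (x ^ 2) ^ (n + 1) / (n + 1)) := by
    funext n
    have : (2 * (n : ℝ) + 1) ≠ 0 := by positivity
    have : ((n : ℝ) + 1) ≠ 0 := by positivity
    field_simp
    ring
  have hv : Real.log 2 - Real.binEntropy ((1 + x) / 2) =
      1 / 2 * (x * (Real.log (1 + x) - Real.log (1 - x)) - -Real.log (1 - x ^ 2)) := by
    rw [show 1 - x ^ 2 = (1 + x) * (1 - x) by ring, Real.log_mul (by linarith) (by linarith),
      Real.binEntropy_eq_negMulLog_add_negMulLog_one_sub,
      show 1 - (1 + x) / 2 = (1 - x) / 2 by ring, Real.negMulLog, Real.negMulLog,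
      Real.log_div (by linarith) two_ne_zero, Real.log_div (by linarith) two_ne_zero]
    ring
  rw [hf, hv]
  exact h3

/-- Superadditivity of `x ^ 2 ↦ log 2 - h((1 + x) / 2)` inside the disc of convergence, termwise
from `u ^ n + v ^ n ≤ (u + v) ^ n`. -/
lemma binEntropy_superadd_of_lt {x y r : ℝ} (hr : |r| < 1) (h : r ^ 2 = x ^ 2 + y ^ 2) :
    Real.binEntropy ((1 + r) / 2) + Real.log 2 ≤
      Real.binEntropy ((1 + x) / 2) + Real.binEntropy ((1 + y) / 2) := by
  have hx : |x| < 1 := lt_of_le_of_lt (sq_le_sq.1 (by nlinarith [sq_nonneg y])) hr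
  have hy : |y| < 1 := lt_of_le_of_lt (sq_le_sq.1 (by nlinarith [sq_nonneg x])) hr
  have := hasSum_le (fun n => ?_)
    ((hasSum_binEntropy_defect hx).add (hasSum_binEntropy_defect hy)) (hasSum_binEntropy_defect hr)
  · linarith
  · rw [← add_mul, h]
    exact mul_le_mul_of_nonneg_right
      (pow_add_pow_le (sq_nonneg x) (sq_nonneg y) n.succ_ne_zero) (by positivity)

/-- Superadditivity up to the boundary `|r| = 1`, by shrinking `(x, y, r)` by a factor `t → 1`. -/
lemma binEntropy_superadd {x y r : ℝ} (hr : |r| ≤ 1) (h : r ^ 2 = x ^ 2 + y ^ 2) :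
    Real.binEntropy ((1 + r) / 2) + Real.log 2 ≤
      Real.binEntropy ((1 + x) / 2) + Real.binEntropy ((1 + y) / 2) := by
  have hc : ∀ z : ℝ, Filter.Tendsto (fun t : ℝ => Real.binEntropy ((1 + t * z) / 2))
      (nhdsWithin 1 (Set.Ioo 0 1)) (nhds (Real.binEntropy ((1 + z) / 2))) := by
    intro z
    have : Continuous (fun t : ℝ => Real.binEntropy ((1 + t * z) / 2)) :=
      Real.binEntropy_continuous.comp (by fun_prop)
    simpa using (this.tendsto 1).mono_left nhdsWithin_le_nhds
  have : (nhdsWithin (1 : ℝ) (Set.Ioo 0 1)).NeBot := right_nhdsWithin_Ioo_neBot one_pos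
  refine le_of_tendsto_of_tendsto ((hc r).add_const _) ((hc x).add (hc y)) ?_
  filter_upwards [self_mem_nhdsWithin] with t ht
  refine binEntropy_superadd_of_lt ?_ (by rw [mul_pow, h]; ring)
  rw [abs_mul, abs_of_pos ht.1]
  nlinarith [abs_nonneg r, ht.1, ht.2]

/-- The chain rule for the entropy of two weights with sum `s` and difference `s * u`. -/
lemma negMulLog_add_of_scale (s u : ℝ) :
    Real.negMulLog (s * ((1 + u) / 2)) + Real.negMulLog (s * ((1 - u) / 2)) =
      Real.negMulLog s + s * Real.binEntropy ((1 + u) / 2) := by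
  rw [Real.negMulLog_mul, Real.negMulLog_mul,
    Real.binEntropy_eq_negMulLog_add_negMulLog_one_sub]
  rw [show 1 - (1 + u) / 2 = (1 - u) / 2 by ring]
  ring

/-- Coherence bound for one 2×2 block with diagonal `p, q` and off-diagonal entry `a`: replacing
the diagonal by its mean can only decrease the coherence. The arguments of `negMulLog` on the left
are the eigenvalues of the block. An empty block (`p + q = 0`) forces `a = 0`, so the junk value
of `a / 0` is harmless. -/
lemma block_le {p q a : ℝ} (hp : 0 ≤ p) (hq : 0 ≤ q) (ha : a ^ 2 ≤ p * q) :
    Real.negMulLog ((p + q + √((p - q) ^ 2 + 4 * a ^ 2)) / 2) +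
      Real.negMulLog ((p + q - √((p - q) ^ 2 + 4 * a ^ 2)) / 2) + (p + q) * Real.log 2 ≤
    Real.negMulLog p + Real.negMulLog q + (p + q) * Real.binEntropy (1 / 2 + a / (p + q)) := by
  rcases (add_nonneg hp hq).eq_or_lt with h | hs
  · have hp0 : p = 0 := by linarith
    have hq0 : q = 0 := by linarith
    have ha0 : a = 0 := by subst hp0; nlinarith
    subst hp0 hq0 ha0
    simp
  · set R := √((p - q) ^ 2 + 4 * a ^ 2) with hR
    have hR2 : R ^ 2 = (p - q) ^ 2 + 4 * a ^ 2 := Real.sq_sqrt (by positivity)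
    have hR0 : 0 ≤ R := Real.sqrt_nonneg _
    have hRs : R ≤ p + q := by nlinarith
    have hs' := hs.ne'
    obtain ⟨s, rfl⟩ : ∃ s, q = s - p := ⟨p + q, by ring⟩
    rw [show p + (s - p) = s by ring] at *
    have key := binEntropy_superadd (x := (p - (s - p)) / s) (y := 2 * a / s) (r := R / s)
      (by rw [abs_of_nonneg (by positivity)]; exact (div_le_one hs).2 hRs)
      (by rw [div_pow, hR2]; field_simp; ring)
    have e1 := negMulLog_add_of_scale s (R / s)
    have e2 := negMulLog_add_of_scale s ((p - (s - p)) / s)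
    rw [show s * ((1 + R / s) / 2) = (s + R) / 2 by field_simp,
      show s * ((1 - R / s) / 2) = (s - R) / 2 by field_simp] at e1
    rw [show s * ((1 + (p - (s - p)) / s) / 2) = p by field_simp; ring,
      show s * ((1 - (p - (s - p)) / s) / 2) = s - p by field_simp; ring] at e2
    rw [e1, e2, show 1 / 2 + a / s = (1 + 2 * a / s) / 2 by field_simp]
    nlinarith

/-- Concavity of the binary entropy, applied to the two blocks with weights `s` and `t`. A block of
weight `0` has `a = 0`, so the junk value of `a / 0` is harmless. -/
lemma concave_mix {s t a b : ℝ} (hs : 0 ≤ s) (ht : 0 ≤ t) (hst : s + t = 1)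
    (ha : 2 * |a| ≤ s) (hb : 2 * |b| ≤ t) :
    s * Real.binEntropy (1 / 2 + a / s) + t * Real.binEntropy (1 / 2 + b / t) ≤
      Real.binEntropy (1 / 2 + (a + b)) := by
  have aux : ∀ {s a : ℝ}, 0 ≤ s → 2 * |a| ≤ s →
      1 / 2 + a / s ∈ Set.Icc (0 : ℝ) 1 ∧ s * (1 / 2 + a / s) = s / 2 + a := by
    intro s a hs ha
    rcases hs.eq_or_lt with h | h
    · have : a = 0 := abs_nonpos_iff.1 (by linarith)
      subst this; subst h; norm_num
    · have h1 : |a / s| ≤ 1 / 2 := by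
        rw [abs_div, abs_of_pos h, div_le_iff₀ h]; linarith
      have := abs_le.1 h1
      refine ⟨⟨by linarith, by linarith⟩, by field_simp⟩
  have h := Real.strictConcave_binEntropy.concaveOn.2 (aux hs ha).1 (aux ht hb).1 hs ht hst
  simp only [smul_eq_mul, (aux hs ha).2, (aux ht hb).2] at h
  rwa [show s / 2 + a + (t / 2 + b) = 1 / 2 + (a + b) by linarith] at h

lemma rhoGen_isHermitian (m00 m11 m22 m33 a b : ℝ) :
    (rhoGen m00 m11 m22 m33 a b).IsHermitian := by
  ext ⟨i, i'⟩ ⟨j, j'⟩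
  fin_cases i <;> fin_cases i' <;> fin_cases j <;> fin_cases j' <;>
    simp [rhoGen, Matrix.conjTranspose_apply]

/-- `rhoGen` in the order `|00⟩, |01⟩, |10⟩, |11⟩`. -/
lemma reindex_rhoGen (m00 m11 m22 m33 a b : ℝ) :
    Matrix.reindex (finProdFinEquiv (m := 2) (n := 2)) finProdFinEquiv
      (rhoGen m00 m11 m22 m33 a b) =
    !![(m00 : ℂ), 0, 0, a; 0, m11, b, 0; 0, b, m22, 0; a, 0, 0, m33] := by
  have f0 : (finProdFinEquiv (m := 2) (n := 2)).symm 0 = (0, 0) := by decide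
  have f1 : (finProdFinEquiv (m := 2) (n := 2)).symm 1 = (0, 1) := by decide
  have f2 : (finProdFinEquiv (m := 2) (n := 2)).symm 2 = (1, 0) := by decide
  have f3 : (finProdFinEquiv (m := 2) (n := 2)).symm 3 = (1, 1) := by decide
  have hall : ∀ P : Fin 4 → Prop, (∀ i, P i) ↔ P 0 ∧ P 1 ∧ P 2 ∧ P 3 :=
    fun P => Fin.forall_fin_succ.trans (by simp [Fin.forall_fin_succ])
  ext i j
  change rhoGen m00 m11 m22 m33 a b ((finProdFinEquiv (m := 2) (n := 2)).symm i)
    ((finProdFinEquiv (m := 2) (n := 2)).symm j) = _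
  revert i j
  show ∀ i j : Fin 4, _
  simp only [hall]
  rw [f0, f1, f2, f3]
  simp [rhoGen]

lemma quadratic_factor {p q a l k : ℝ} (hs : l + k = p + q) (hp : l * k = p * q - a ^ 2) :
    (Polynomial.X - Polynomial.C (p : ℂ)) * (Polynomial.X - Polynomial.C (q : ℂ)) -
        Polynomial.C (a : ℂ) ^ 2 =
      (Polynomial.X - Polynomial.C (l : ℂ)) * (Polynomial.X - Polynomial.C (k : ℂ)) := by
  have c1 := congrArg (fun x : ℝ => Polynomial.C (x : ℂ)) hs
  have c2 := congrArg (fun x : ℝ => Polynomial.C (x : ℂ)) hp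
  simp only [Complex.ofReal_add, Complex.ofReal_sub, Complex.ofReal_mul, Complex.ofReal_pow,
    map_add, map_sub, map_mul, map_pow] at c1 c2
  linear_combination Polynomial.X * c1 - c2

/-- The two parity blocks are decoupled, so the characteristic polynomial splits as soon as `l0, l3`
and `l1, l2` have the trace and determinant of the respective block. -/
lemma rhoGen_charpoly {m00 m11 m22 m33 a b l0 l1 l2 l3 : ℝ}
    (hs : l0 + l3 = m00 + m33) (hp : l0 * l3 = m00 * m33 - a ^ 2)
    (hs' : l1 + l2 = m11 + m22) (hp' : l1 * l2 = m11 * m22 - b ^ 2) :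
    (rhoGen m00 m11 m22 m33 a b).charpoly =
      (({(l0 : ℂ), (l1 : ℂ), (l2 : ℂ), (l3 : ℂ)} : Multiset ℂ).map
        fun l => Polynomial.X - Polynomial.C l).prod := by
  rw [← Matrix.charpoly_reindex (finProdFinEquiv (m := 2) (n := 2)), reindex_rhoGen,
    Matrix.charpoly]
  have hM : (!![(m00 : ℂ), 0, 0, a; 0, m11, b, 0; 0, b, m22, 0; a, 0, 0, m33]).charmatrix =
      !![Polynomial.X - Polynomial.C (m00 : ℂ), 0, 0, -Polynomial.C (a : ℂ);
         0, Polynomial.X - Polynomial.C (m11 : ℂ), -Polynomial.C (b : ℂ), 0;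
         0, -Polynomial.C (b : ℂ), Polynomial.X - Polynomial.C (m22 : ℂ), 0;
         -Polynomial.C (a : ℂ), 0, 0, Polynomial.X - Polynomial.C (m33 : ℂ)] := by
    ext i j : 2
    fin_cases i <;> fin_cases j <;> simp [Matrix.charmatrix]
  have hdet : ∀ p q r s u v : Polynomial ℂ,
      (!![p, 0, 0, u; 0, q, v, 0; 0, v, r, 0; u, 0, 0, s]).det =
        (p * s - u ^ 2) * (q * r - v ^ 2) := by
    intro p q r s u v
    simp [Matrix.det_succ_row_zero, Fin.sum_univ_succ, Fin.succAbove]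
    ring
  rw [hM, hdet, neg_sq, neg_sq, quadratic_factor hs hp, quadratic_factor hs' hp']
  simp only [Multiset.insert_eq_cons, Multiset.map_cons, Multiset.map_singleton,
    Multiset.prod_cons, Multiset.prod_singleton]
  ring

lemma vnEntropy_rhoGen {m00 m11 m22 m33 a b l0 l1 l2 l3 : ℝ}
    (hs : l0 + l3 = m00 + m33) (hp : l0 * l3 = m00 * m33 - a ^ 2)
    (hs' : l1 + l2 = m11 + m22) (hp' : l1 * l2 = m11 * m22 - b ^ 2) :
    vnEntropy (rhoGen m00 m11 m22 m33 a b) =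
      (Real.negMulLog l0 + Real.negMulLog l1 + Real.negMulLog l2 + Real.negMulLog l3) /
        Real.log 2 := by
  have hH := rhoGen_isHermitian m00 m11 m22 m33 a b
  have hroots := hH.roots_charpoly_eq_eigenvalues
  rw [rhoGen_charpoly hs hp hs' hp', Polynomial.roots_multiset_prod_X_sub_C] at hroots
  have h2 := congrArg (fun s : Multiset ℂ => (s.map fun z => Real.negMulLog z.re).sum) hroots
  have h3 : Real.negMulLog l0 + (Real.negMulLog l1 + (Real.negMulLog l2 + Real.negMulLog l3)) =
      ∑ i, Real.negMulLog (hH.eigenvalues i) := by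
    simpa [Multiset.map_map, Function.comp_def] using h2
  rw [vnEntropy, dif_pos hH, ← Finset.sum_neg_distrib, add_assoc, add_assoc, h3, Finset.sum_div]
  refine Finset.sum_congr rfl fun i _ => ?_
  rw [Real.negMulLog, Real.logb]
  ring

lemma diagPart_rhoGen (m00 m11 m22 m33 a b : ℝ) :
    diagPart (rhoGen m00 m11 m22 m33 a b) = rhoGen m00 m11 m22 m33 0 0 := by
  ext i j
  by_cases h : i = j
  · subst h; simp [diagPart, rhoGen]
  · simp [diagPart, rhoGen, h]

lemma binEnt_eq (e : ℝ) : binEnt e = Real.binEntropy e / Real.log 2 := by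
  rw [binEnt, Real.binEntropy_eq_negMulLog_add_negMulLog_one_sub, Real.negMulLog, Real.negMulLog,
    Real.logb, Real.logb]
  ring

/-- the improved BB84 key rate is never smaller than the
Shor–Preskill rate. -/
theorem stmt_7 (m00 m11 m22 m33 ep : ℝ)
    (h00 : 0 ≤ m00) (h11 : 0 ≤ m11) (h22 : 0 ≤ m22) (h33 : 0 ≤ m33)
    (hsum : m00 + m11 + m22 + m33 = 1) (hep0 : 0 ≤ ep) (hep1 : ep ≤ 1) :
    ∀ a b : ℝ, a + b = 1/2 - ep → |a| ≤ Real.sqrt (m00 * m33) →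
      |b| ≤ Real.sqrt (m11 * m22) →
      1 - binEnt ep ≤ relEntCoh (rhoGen m00 m11 m22 m33 a b) ∧
      1 - binEnt ep - binEnt (m11 + m22) ≤
        relEntCoh (rhoGen m00 m11 m22 m33 a b) - binEnt (m11 + m22) := by
  intro a b hab ha hb
  have main : 1 - binEnt ep ≤ relEntCoh (rhoGen m00 m11 m22 m33 a b) := by
    have ha2 : a ^ 2 ≤ m00 * m33 := by
      have := (Real.le_sqrt (abs_nonneg a) (by positivity)).1 ha
      rwa [sq_abs] at this
    have hb2 : b ^ 2 ≤ m11 * m22 := by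
      have := (Real.le_sqrt (abs_nonneg b) (by positivity)).1 hb
      rwa [sq_abs] at this
    have ha3 : 2 * |a| ≤ m00 + m33 := by
      rw [← sq_abs] at ha2
      nlinarith [sq_nonneg (m00 - m33), abs_nonneg a]
    have hb3 : 2 * |b| ≤ m11 + m22 := by
      rw [← sq_abs] at hb2
      nlinarith [sq_nonneg (m11 - m22), abs_nonneg b]
    have k1 := block_le h00 h33 ha2
    have k2 := block_le h11 h22 hb2
    have k3 := concave_mix (add_nonneg h00 h33) (add_nonneg h11 h22) (by linarith) ha3 hb3
    rw [hab, show 1 / 2 + (1 / 2 - ep) = 1 - ep by ring, Real.binEntropy_one_sub] at k3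
    have hA := Real.sq_sqrt (show 0 ≤ (m00 - m33) ^ 2 + 4 * a ^ 2 by positivity)
    have hB := Real.sq_sqrt (show 0 ≤ (m11 - m22) ^ 2 + 4 * b ^ 2 by positivity)
    -- The diagonal part is itself a `rhoGen`, with eigenvalues its diagonal entries.
    rw [relEntCoh, diagPart_rhoGen, vnEntropy_rhoGen (l0 := m00) (l1 := m11) (l2 := m22) (l3 := m33)
      rfl (by ring) rfl (by ring),
      vnEntropy_rhoGen (a := a) (b := b)
        (l0 := (m00 + m33 + √((m00 - m33) ^ 2 + 4 * a ^ 2)) / 2)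
        (l3 := (m00 + m33 - √((m00 - m33) ^ 2 + 4 * a ^ 2)) / 2)
        (l1 := (m11 + m22 + √((m11 - m22) ^ 2 + 4 * b ^ 2)) / 2)
        (l2 := (m11 + m22 - √((m11 - m22) ^ 2 + 4 * b ^ 2)) / 2)
        (by ring) (by nlinarith) (by ring) (by nlinarith), binEnt_eq, ← sub_div,
      ← div_self (Real.log_pos one_lt_two).ne', ← sub_div]
    refine div_le_div_of_nonneg_right ?_ (Real.log_pos one_lt_two).le
    have : (m00 + m33) * Real.log 2 + (m11 + m22) * Real.log 2 = Real.log 2 := by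
      rw [← add_mul, show m00 + m33 + (m11 + m22) = 1 by linarith, one_mul]
    linarith
  exact ⟨main, by linarith⟩

end
end
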